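/- There exists an open set Ω ⊆ ℝ, a countable union of disjoint open intervals accumulating at 0 (so that 0 ∈ ∂Ω), such that |Ω ∩ (−r,r)|/(2r) → 0 as r → 0⁺; and for any such Ω, the function u(t) := ∫₀^t ∫₀^s χ_Ω(τ) dτ ds satisfies: u is C^{1,1} on ℝ, u''(t) = χ_Ω(t) for a.e. t, u'' = χ_{{u'' ≠ 0}} a.e., and u(r) = o(r²) as r → 0. In particular, quadratic non-degeneracy at the free boundary point 0 fails for the one-dimensional problem u'' = χ_{{u''≠0}}. -/

import Mathlib

open MeasureTheory Metric Set Filter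
open scoped Topology ENNReal Asymptotics

noncomputable section

/-- `Ω ⊆ ℝ` is a countable union of pairwise disjoint open intervals. -/
def IsUnionOfDisjointIntervals (Ω : Set ℝ) : Prop :=
  ∃ I : ℕ → Set ℝ, (∀ j, ∃ a b : ℝ, a < b ∧ I j = Set.Ioo a b) ∧
    Pairwise (Function.onFun Disjoint I) ∧ Ω = ⋃ j, I j

/-- The density of `Ω` in `(-r, r)` tends to `0` as `r → 0⁺`. -/
def VanishingDensityAtZero (Ω : Set ℝ) : Prop :=
  Tendsto (fun r : ℝ => (volume (Ω ∩ Set.Ioo (-r) r)).toReal / (2 * r)) (𝓝[>] 0) (𝓝 0)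

theorem aux_interval_bound (x r : ℝ) (hx : 0 < x) (hr : 0 < r) :
    volume (Ioo x (x + x ^ 3) ∩ Ioo (-r) r) ≤ ENNReal.ofReal (r ^ 2) * ENNReal.ofReal x := by
  by_cases h : x < r
  · refine (measure_mono inter_subset_left).trans ?_
    rw [Real.volume_Ioo, ← ENNReal.ofReal_mul (by positivity)]
    apply ENNReal.ofReal_le_ofReal
    have : x ^ 2 ≤ r ^ 2 := by gcongr
    nlinarith
  · have : Ioo x (x + x ^ 3) ∩ Ioo (-r) r = ∅ := by
      ext y
      simp only [mem_inter_iff, mem_Ioo, mem_empty_iff_false, iff_false]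
      rintro ⟨⟨h1, _⟩, _, h2⟩
      linarith
    rw [this]
    simp

theorem aux_exists : ∃ Ω : Set ℝ, IsOpen Ω ∧ IsUnionOfDisjointIntervals Ω ∧ 0 ∈ frontier Ω ∧
      VanishingDensityAtZero Ω := by
  let x : ℕ → ℝ := fun j => (1 / 2 : ℝ) ^ j
  have hx0 : ∀ j, 0 < x j := fun j => by positivity
  have hx1 : ∀ j, x j ≤ 1 := fun j => pow_le_one₀ (by norm_num) (by norm_num)
  let I : ℕ → Set ℝ := fun j => Ioo (x j) (x j + x j ^ 3)
  have hopen : IsOpen (⋃ j, I j) := isOpen_iUnion fun j => isOpen_Ioo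
  have hlt : ∀ j, x j < x j + x j ^ 3 := fun j => by
    have := hx0 j
    have : 0 < x j ^ 3 := by positivity
    linarith
  have hup : ∀ j, x j + x j ^ 3 ≤ 2 * x j := fun j => by
    have h : x j ^ 3 ≤ x j := pow_le_of_le_one (hx0 j).le (hx1 j) (by norm_num)
    linarith
  have hlim : Tendsto x atTop (𝓝 0) :=
    tendsto_pow_atTop_nhds_zero_of_lt_one (by norm_num) (by norm_num)
  refine ⟨⋃ j, I j, hopen, ⟨I, fun j => ⟨_, _, hlt j, rfl⟩, ?_, rfl⟩, ?_, ?_⟩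
  · refine (pairwise_disjoint_on I).2 fun i j hij => ?_
    rw [Set.disjoint_left]
    rintro y ⟨h1, _⟩ ⟨_, h2⟩
    have h3 : x j ≤ x (i + 1) := pow_le_pow_of_le_one (by norm_num) (by norm_num) hij
    have h4 : 2 * x (i + 1) = x i := by simp only [x, pow_succ]; ring
    linarith [hup j]
  · rw [hopen.frontier_eq]
    constructor
    · refine mem_closure_of_tendsto (f := fun j => x j + x j ^ 3 / 2) (b := atTop) ?_ ?_
      · simpa using hlim.add ((hlim.pow 3).div_const 2)
      · refine Eventually.of_forall fun j => mem_iUnion.2 ⟨j, ?_, ?_⟩ <;> linarith [hlt j]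
    · intro h
      obtain ⟨j, h1, _⟩ := mem_iUnion.1 h
      linarith [hx0 j]
  · unfold VanishingDensityAtZero
    have hb : ∀ r : ℝ, 0 < r → (volume ((⋃ j, I j) ∩ Ioo (-r) r)).toReal ≤ r ^ 2 * 2 := by
      intro r hr
      apply ENNReal.toReal_le_of_le_ofReal (by positivity)
      have hs : HasSum x 2 := hasSum_geometric_two
      calc volume ((⋃ j, I j) ∩ Ioo (-r) r) = volume (⋃ j, I j ∩ Ioo (-r) r) := by
            rw [iUnion_inter]
        _ ≤ ∑' j, volume (I j ∩ Ioo (-r) r) := measure_iUnion_le _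
        _ ≤ ∑' j, ENNReal.ofReal (r ^ 2) * ENNReal.ofReal (x j) :=
            ENNReal.tsum_le_tsum fun j => aux_interval_bound _ _ (hx0 j) hr
        _ = ENNReal.ofReal (r ^ 2 * 2) := by
            rw [ENNReal.tsum_mul_left, ← ENNReal.ofReal_tsum_of_nonneg (fun j => (hx0 j).le)
              hs.summable, hs.tsum_eq, ENNReal.ofReal_mul (by positivity)]
    have hid : Tendsto (fun r : ℝ => r) (𝓝[>] 0) (𝓝 0) := tendsto_id.mono_left nhdsWithin_le_nhds
    refine tendsto_of_tendsto_of_tendsto_of_le_of_le' tendsto_const_nhds hid ?_ ?_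
    · filter_upwards [self_mem_nhdsWithin] with r hr
      have : (0:ℝ) < r := hr
      positivity
    · filter_upwards [self_mem_nhdsWithin] with r hr
      have hr : (0:ℝ) < r := hr
      rw [div_le_iff₀ (by positivity)]
      nlinarith [hb r hr]

theorem aux_locInt (Ω : Set ℝ) (hΩ : IsOpen Ω) :
    LocallyIntegrable (Ω.indicator (fun _ => (1:ℝ))) volume :=
  (locallyIntegrable_const (1:ℝ)).indicator hΩ.measurableSet

theorem aux_littleO (Ω : Set ℝ) (hΩ : IsOpen Ω) (hd : VanishingDensityAtZero Ω) (u : ℝ → ℝ)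
    (hu : u = fun t => ∫ s in (0:ℝ)..t, ∫ τ in (0:ℝ)..s, Ω.indicator (fun _ => (1:ℝ)) τ) :
    u =o[𝓝 0] fun r : ℝ => r ^ 2 := by
  have hbound : ∀ t : ℝ, t ≠ 0 →
      |u t| ≤ (volume (Ω ∩ Ioo (-(2 * |t|)) (2 * |t|))).toReal * |t| := by
    intro t ht
    have ht' : 0 < |t| := abs_pos.2 ht
    rw [hu]
    have := intervalIntegral.norm_integral_le_of_norm_le_const (a := 0) (b := t)
      (f := fun s => ∫ τ in (0:ℝ)..s, Ω.indicator (fun _ => (1:ℝ)) τ)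
      (C := (volume (Ω ∩ Ioo (-(2 * |t|)) (2 * |t|))).toReal) ?_
    · simpa using this
    intro s hs
    have hs' : |s| ≤ |t| := by
      have := uIoc_subset_uIcc hs
      have := abs_sub_left_of_mem_uIcc this
      simpa using this
    rw [intervalIntegral.norm_integral_eq_norm_integral_uIoc,
      setIntegral_indicator hΩ.measurableSet, setIntegral_const]
    simp only [smul_eq_mul, mul_one, Measure.real, Real.norm_eq_abs, ENNReal.abs_toReal]
    apply ENNReal.toReal_mono
    · exact ((measure_mono inter_subset_right).trans_lt measure_Ioo_lt_top).ne
    · apply measure_mono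
      rintro y ⟨hy, hyΩ⟩
      refine ⟨hyΩ, ?_⟩
      have := abs_sub_left_of_mem_uIcc (uIoc_subset_uIcc hy)
      have h3 : |y| ≤ |s| := by simpa using this
      exact abs_lt.1 (by linarith)
  rw [Asymptotics.isLittleO_iff]
  intro c hc
  have hev : ∀ᶠ r : ℝ in 𝓝[>] 0, (volume (Ω ∩ Ioo (-r) r)).toReal / (2 * r) < c / 4 :=
    hd.eventually (gt_mem_nhds (by positivity))
  have hev' := mem_nhdsGT_iff_exists_Ioo_subset.1 hev
  obtain ⟨δ, hδ, hsub⟩ := hev'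
  have hδ : (0:ℝ) < δ := hδ
  filter_upwards [Metric.ball_mem_nhds (0:ℝ) (half_pos hδ)] with t ht
  by_cases h0 : t = 0
  · subst h0
    simp [hu]
  · have ht' : 0 < |t| := abs_pos.2 h0
    have htδ : |t| < δ / 2 := by simpa using ht
    have h1 : (volume (Ω ∩ Ioo (-(2 * |t|)) (2 * |t|))).toReal / (2 * (2 * |t|)) < c / 4 :=
      hsub ⟨by positivity, by linarith⟩
    rw [div_lt_iff₀ (by positivity)] at h1
    have h2 := hbound t h0
    rw [Real.norm_eq_abs, Real.norm_eq_abs, abs_of_nonneg (sq_nonneg t), ← sq_abs t]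
    nlinarith

/-- **Failure of non-degeneracy in one dimension** (Section 3.1 of Figalli–Shahgholian).
There is an open set `Ω ⊆ ℝ`, a countable union of disjoint open intervals accumulating at
`0` (so `0 ∈ ∂Ω`), whose density in `(-r,r)` tends to `0`; and for any such `Ω` the function
`u(t) = ∫₀ᵗ∫₀ˢ χ_Ω(τ) dτ ds` is `C^{1,1}`, satisfies `u'' = χ_Ω = χ_{u'' ≠ 0}` a.e., and
`u(r) = o(r²)`, so quadratic non-degeneracy fails at the free boundary point `0`. -/
theorem one_dim_nondegeneracy_fails :
    (∃ Ω : Set ℝ, IsOpen Ω ∧ IsUnionOfDisjointIntervals Ω ∧ 0 ∈ frontier Ω ∧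
      VanishingDensityAtZero Ω) ∧
    ∀ Ω : Set ℝ, IsOpen Ω → IsUnionOfDisjointIntervals Ω → 0 ∈ frontier Ω →
      VanishingDensityAtZero Ω →
      ∀ u : ℝ → ℝ,
        (u = fun t => ∫ s in (0:ℝ)..t, ∫ τ in (0:ℝ)..s, Ω.indicator (fun _ => (1:ℝ)) τ) →
        Differentiable ℝ u ∧
        LipschitzWith 1 (deriv u) ∧
        (∀ᵐ t : ℝ, deriv (deriv u) t = Ω.indicator (fun _ => (1:ℝ)) t) ∧
        (∀ᵐ t : ℝ, deriv (deriv u) t =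
          Set.indicator {s : ℝ | deriv (deriv u) s ≠ 0} (fun _ => (1:ℝ)) t) ∧
        (u =o[𝓝 0] fun r : ℝ => r ^ 2) ∧
        ¬ ∃ c : ℝ, 0 < c ∧ ∃ r0 : ℝ, 0 < r0 ∧
            ∀ r : ℝ, 0 < r → r < r0 → ∃ t ∈ Set.Icc (-r) r, c * r ^ 2 ≤ |u t| := by
  refine ⟨aux_exists, ?_⟩
  intro Ω hΩ _ _ hd u hu
  have hloc := aux_locInt Ω hΩ
  set g : ℝ → ℝ := fun s => ∫ τ in (0:ℝ)..s, Ω.indicator (fun _ => (1:ℝ)) τ with hg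
  have hint : ∀ a b : ℝ, IntervalIntegrable (Ω.indicator (fun _ => (1:ℝ))) volume a b :=
    fun a b => intervalIntegrable_iff.mpr <|
      (hloc.integrableOn_isCompact isCompact_uIcc).mono_set uIoc_subset_uIcc
  have hlip : LipschitzWith 1 g := by
    refine LipschitzWith.of_dist_le_mul fun a b => ?_
    rw [Real.dist_eq, Real.dist_eq, hg]
    simp only
    rw [intervalIntegral.integral_interval_sub_left (hint _ _) (hint _ _), ← Real.norm_eq_abs,
      NNReal.coe_one]
    refine intervalIntegral.norm_integral_le_of_norm_le_const fun y _ => ?_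
    by_cases hy : y ∈ Ω <;> simp [hy]
  have hu' : ∀ t, HasDerivAt u (g t) t := fun t => by
    rw [hu]
    exact hlip.continuous.integral_hasStrictDerivAt 0 t |>.hasDerivAt
  have hdu : deriv u = g := funext fun t => (hu' t).deriv
  have hae : ∀ᵐ t : ℝ, deriv (deriv u) t = Ω.indicator (fun _ => (1:ℝ)) t := by
    rw [hdu]
    filter_upwards [LocallyIntegrable.ae_hasDerivAt_integral hloc] with t ht
    exact (ht 0).deriv
  have ho := aux_littleO Ω hΩ hd u hu
  refine ⟨fun t => (hu' t).differentiableAt, hdu ▸ hlip, hae, ?_, ho, ?_⟩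
  · filter_upwards [hae] with t ht
    by_cases h : t ∈ Ω
    · simp [Set.indicator, h] at ht
      simp [Set.indicator, ht]
    · simp [Set.indicator, h] at ht
      simp [Set.indicator, ht]
  · rintro ⟨c, hc, r0, hr0, H⟩
    have h1 := (Asymptotics.isLittleO_iff.1 ho) (half_pos hc)
    obtain ⟨δ, hδ, hb⟩ := Metric.eventually_nhds_iff.1 h1
    have hm : 0 < min δ r0 := lt_min hδ hr0
    obtain ⟨t, ht, hct⟩ := H (min δ r0 / 2) (by positivity)
      (by linarith [min_le_right δ r0])
    have hta : |t| ≤ min δ r0 / 2 := abs_le.2 ht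
    have h2 := hb (y := t) (by simpa using (by linarith [min_le_left δ r0] : |t| < δ))
    rw [Real.norm_eq_abs, Real.norm_eq_abs, abs_of_nonneg (sq_nonneg t), ← sq_abs t] at h2
    have h3 : |t| ^ 2 ≤ (min δ r0 / 2) ^ 2 := by gcongr
    have h4 : 0 < (min δ r0 / 2) ^ 2 := by positivity
    nlinarith
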